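/- The is a bijection between the set of ideals of finite index in the Heisenberg Lie algebra L_p over Z_p, up to the action of Aut(L_p), and the set of 5-tuples (e1, e2, e3, e4, e5) ∈ ℕ_0^5 with e4 ≤ e3, e5 ≤ e3, e5 ≤ e4 ≤ e5 + e1; under this bijection an ideal with invariants (e1,...,e5) has index p^{e1 + 2e2 + 3e3}. -/

import Mathlib

/-- Heisenberg Lie bracket over ℤ_[p] in coordinates w.r.t. (x,y,z), [x,y] = z. -/
noncomputable def hbr {p : ℕ} [Fact p.Prime] (u v : Fin 3 → ℤ_[p]) : Fin 3 → ℤ_[p] :=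
  fun i => if i = 2 then u 0 * v 1 - u 1 * v 0 else 0

namespace HeisAux

variable {p : ℕ} [Fact p.Prime]

abbrev V (p : ℕ) [Fact p.Prime] := Fin 3 → ℤ_[p]

def Good (I : Submodule ℤ_[p] (V p)) : Prop :=
  (∀ u v : Fin 3 → ℤ_[p], v ∈ I → hbr u v ∈ I) ∧ Nat.card ((Fin 3 → ℤ_[p]) ⧸ I) ≠ 0

def Rel (I J : Submodule ℤ_[p] (V p)) : Prop :=
  ∃ φ : (Fin 3 → ℤ_[p]) ≃ₗ[ℤ_[p]] (Fin 3 → ℤ_[p]),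
          (∀ u v : Fin 3 → ℤ_[p], φ (hbr u v) = hbr (φ u) (φ v)) ∧
          Submodule.map (φ : (Fin 3 → ℤ_[p]) →ₗ[ℤ_[p]] (Fin 3 → ℤ_[p])) I = J

theorem Rel.refl (I : Submodule ℤ_[p] (V p)) : Rel I I :=
  ⟨LinearEquiv.refl _ _, fun _ _ => rfl, by ext v; simp⟩

theorem Rel.symm {I J : Submodule ℤ_[p] (V p)} (h : Rel I J) : Rel J I := by
  obtain ⟨φ, h1, h2⟩ := h
  refine ⟨φ.symm, fun u v => ?_, ?_⟩
  · apply φ.injective; rw [h1]; simp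
  · subst h2
    ext v
    simp [Submodule.mem_map]

theorem Rel.trans {I J K : Submodule ℤ_[p] (V p)} (h : Rel I J) (h' : Rel J K) : Rel I K := by
  obtain ⟨φ, h1, h2⟩ := h
  obtain ⟨ψ, h3, h4⟩ := h'
  refine ⟨φ.trans ψ, fun u v => ?_, ?_⟩
  · simp [h1, h3]
  · subst h2 h4
    ext v
    simp [Submodule.mem_map]

theorem Rel.card {I J : Submodule ℤ_[p] (V p)} (h : Rel I J) :
    Nat.card (V p ⧸ I) = Nat.card (V p ⧸ J) := by
  obtain ⟨φ, h1, h2⟩ := h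
  exact Nat.card_congr (Submodule.Quotient.equiv I J φ h2).toEquiv

theorem Rel.good {I J : Submodule ℤ_[p] (V p)} (h : Rel I J) (hI : Good I) : Good J := by
  refine ⟨?_, h.card ▸ hI.2⟩
  obtain ⟨φ, h1, h2⟩ := h
  subst h2
  rintro u v ⟨w, hw, rfl⟩
  refine ⟨hbr (φ.symm u) w, hI.1 _ _ hw, ?_⟩
  simp [h1]

/-- the automorphism from a matrix in GL2 -/
noncomputable def gl (a b c d e : ℤ_[p]) (h : e * (a * d - b * c) = 1) : V p ≃ₗ[ℤ_[p]] V p where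
  toFun v := ![a * v 0 + b * v 1, c * v 0 + d * v 1, (a * d - b * c) * v 2]
  invFun v := ![e * (d * v 0 - b * v 1), e * (a * v 1 - c * v 0), e * v 2]
  map_add' u v := by ext i; fin_cases i <;> simp <;> ring
  map_smul' r v := by ext i; fin_cases i <;> simp <;> ring
  left_inv v := by
    ext i; fin_cases i <;> simp
    · linear_combination (v 0) * h
    · linear_combination (v 1) * h
    · linear_combination (v 2) * h
  right_inv v := by
    ext i; fin_cases i <;> simp
    · linear_combination (v 0) * h
    · linear_combination (v 1) * h
    · linear_combination (v 2) * h

theorem gl_br (a b c d e : ℤ_[p]) (h : e * (a * d - b * c) = 1) (u v : V p) :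
    gl a b c d e h (hbr u v) = hbr (gl a b c d e h u) (gl a b c d e h v) := by
  ext i; fin_cases i <;> simp [gl, hbr]; ring

theorem rel_gl (a b c d e : ℤ_[p]) (h : e * (a * d - b * c) = 1) {I J : Submodule ℤ_[p] (V p)}
    (h1 : ∀ v ∈ I, ![a * v 0 + b * v 1, c * v 0 + d * v 1, (a * d - b * c) * v 2] ∈ J)
    (h2 : ∀ v ∈ J, ![e * (d * v 0 - b * v 1), e * (a * v 1 - c * v 0), e * v 2] ∈ I) :
    Rel I J := by
  refine ⟨gl a b c d e h, gl_br a b c d e h, ?_⟩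
  ext v
  constructor
  · rintro ⟨w, hw, rfl⟩
    exact h1 w hw
  · intro hv
    exact ⟨(gl a b c d e h).symm v, h2 v hv, by simp⟩

/-- triangular submodule -/
def R (a b c : ℕ) (s t : ℤ_[p]) : Submodule ℤ_[p] (V p) where
  carrier := {v | ∃ α β γ : ℤ_[p], v 0 = (p:ℤ_[p]) ^ a * α ∧ v 1 = (p:ℤ_[p]) ^ b * β ∧
    v 2 = s * α + t * β + (p:ℤ_[p]) ^ c * γ}
  zero_mem' := ⟨0, 0, 0, by simp⟩
  add_mem' := by
    rintro u v ⟨α, β, γ, h0, h1, h2⟩ ⟨α', β', γ', h0', h1', h2'⟩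
    exact ⟨α + α', β + β', γ + γ', by simp [h0, h0']; ring, by simp [h1, h1']; ring,
      by simp [h2, h2']; ring⟩
  smul_mem' := by
    rintro r v ⟨α, β, γ, h0, h1, h2⟩
    exact ⟨r * α, r * β, r * γ, by simp [h0]; ring, by simp [h1]; ring, by simp [h2]; ring⟩

theorem mem_R {a b c : ℕ} {s t : ℤ_[p]} {v : V p} : v ∈ R a b c s t ↔
    ∃ α β γ : ℤ_[p], v 0 = (p:ℤ_[p]) ^ a * α ∧ v 1 = (p:ℤ_[p]) ^ b * β ∧
    v 2 = s * α + t * β + (p:ℤ_[p]) ^ c * γ := Iff.rfl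

theorem R_congr {a b c : ℕ} {s t s' t' : ℤ_[p]} (hs : (p:ℤ_[p]) ^ c ∣ s - s')
    (ht : (p:ℤ_[p]) ^ c ∣ t - t') : (R a b c s t : Submodule ℤ_[p] (V p)) = R a b c s' t' := by
  obtain ⟨k, hk⟩ := hs
  obtain ⟨l, hl⟩ := ht
  ext v
  constructor
  · rintro ⟨α, β, γ, h0, h1, h2⟩
    exact ⟨α, β, γ + k * α + l * β, h0, h1, by rw [h2]; linear_combination α * hk + β * hl⟩
  · rintro ⟨α, β, γ, h0, h1, h2⟩
    exact ⟨α, β, γ - k * α - l * β, h0, h1, by rw [h2]; linear_combination -α * hk - β * hl⟩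

theorem move1 {a b c : ℕ} (hab : b ≤ a) (s t l : ℤ_[p]) :
    Rel (R a b c s t) (R a b c s (t + l * s)) := by
  obtain ⟨k, rfl⟩ := Nat.exists_eq_add_of_le hab
  refine rel_gl 1 (-(l * (p:ℤ_[p]) ^ k)) 0 1 1 (by ring) ?_ ?_
  · rintro v ⟨α, β, γ, h0, h1, h2⟩
    exact ⟨α - l * β, β, γ, by simp [h0, h1]; ring, by simp [h1], by simp [h2]; ring⟩
  · rintro v ⟨α, β, γ, h0, h1, h2⟩
    exact ⟨α + l * β, β, γ, by simp [h0, h1]; ring, by simp [h1], by simp [h2]; ring⟩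

theorem move2 {b c k : ℕ} (s t l : ℤ_[p]) :
    Rel (R (b + k) b c s t) (R (b + k) b c (s + l * (p:ℤ_[p]) ^ k * t) t) := by
  refine rel_gl 1 0 (-l) 1 1 (by ring) ?_ ?_
  · rintro v ⟨α, β, γ, h0, h1, h2⟩
    exact ⟨α, β - l * (p:ℤ_[p]) ^ k * α, γ, by simp [h0], by simp [h0, h1]; ring,
      by simp [h2]; ring⟩
  · rintro v ⟨α, β, γ, h0, h1, h2⟩
    exact ⟨α, β + l * (p:ℤ_[p]) ^ k * α, γ, by simp [h0], by simp [h0, h1]; ring,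
      by simp [h2]; ring⟩

theorem move3 {a b c : ℕ} (s t u u' w w' : ℤ_[p]) (hu : u * u' = 1) (hw : w * w' = 1) :
    Rel (R a b c s t) (R a b c (w * s) (u * t)) := by
  have hh : u' * w' * (u * w - 0 * 0) = 1 := by linear_combination hw + w * w' * hu
  refine rel_gl u 0 0 w (u' * w') hh ?_ ?_
  · rintro v ⟨α, β, γ, h0, h1, h2⟩
    exact ⟨u * α, w * β, u * w * γ, by simp [h0]; ring, by simp [h1]; ring,
      by simp [h2]; ring⟩
  · rintro v ⟨α, β, γ, h0, h1, h2⟩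
    refine ⟨u' * α, w' * β, u' * w' * γ, ?_, ?_, ?_⟩
    · simp [h0]; linear_combination u' * (p:ℤ_[p]) ^ a * α * hw
    · simp [h1]; linear_combination w' * (p:ℤ_[p]) ^ b * β * hu
    · simp [h2]; linear_combination u' * s * α * hw + w' * t * β * hu

theorem unit_form (c : ℕ) (s : ℤ_[p]) : ∃ (n : ℕ) (u u' : ℤ_[p]), n ≤ c ∧ u * u' = 1 ∧
    (p:ℤ_[p]) ^ c ∣ u * s - (p:ℤ_[p]) ^ n := by
  by_cases h : (p:ℤ_[p]) ^ c ∣ s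
  · exact ⟨c, 1, 1, le_rfl, by ring, by simpa using h⟩
  · have hs : s ≠ 0 := by rintro rfl; simp at h
    have := PadicInt.unitCoeff_spec hs
    refine ⟨s.valuation, ((PadicInt.unitCoeff hs)⁻¹ : ℤ_[p]ˣ), (PadicInt.unitCoeff hs : ℤ_[p]ˣ),
      ?_, by simp, ?_⟩
    · by_contra hc
      apply h
      rw [this]
      exact Dvd.dvd.mul_left (pow_dvd_pow _ (by omega)) _
    · nth_rewrite 2 [this]
      rw [← mul_assoc]; simp

def Valid (e : Fin 5 → ℕ) : Prop := e 3 ≤ e 2 ∧ e 4 ≤ e 2 ∧ e 4 ≤ e 3 ∧ e 3 ≤ e 4 + e 0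

noncomputable def Rep (p : ℕ) [Fact p.Prime] (e : Fin 5 → ℕ) : Submodule ℤ_[p] (V p) :=
  R (e 1 + e 2 + e 0) (e 1 + e 2) (e 2) ((p:ℤ_[p]) ^ (e 3)) ((p:ℤ_[p]) ^ (e 4))

theorem reduce (b c k : ℕ) (hcb : c ≤ b) (s t : ℤ_[p]) :
    ∃ e, Valid e ∧ Rel (R (b + k) b c s t) (Rep p e) := by
  obtain ⟨j, rfl⟩ := Nat.exists_eq_add_of_le' hcb
  obtain ⟨m, w, w', hm, hw, hws⟩ := unit_form c s
  obtain ⟨n, u, u', hn, hu, hut⟩ := unit_form c t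
  have h1 := move3 (a := j + c + k) (b := j + c) (c := c) s t u u' w w' hu hw
  rw [R_congr hws hut] at h1
  obtain ⟨n', hn', hnm, h2⟩ : ∃ n', n' ≤ c ∧ n' ≤ m ∧
      Rel (R (j + c + k) (j + c) c s t) (R (j + c + k) (j + c) c ((p:ℤ_[p]) ^ m) ((p:ℤ_[p]) ^ n')) := by
    by_cases h : n ≤ m
    · exact ⟨n, hn, h, h1⟩
    · refine ⟨m, hm, le_rfl, h1.trans ?_⟩
      convert move1 (a := j + c + k) (b := j + c) (c := c) (by omega) ((p:ℤ_[p]) ^ m) ((p:ℤ_[p]) ^ n) (1 - (p:ℤ_[p]) ^ (n - m)) using 2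
      rw [sub_mul, ← pow_add, Nat.sub_add_cancel (by omega)]; ring
  obtain ⟨m', hm', hnm', hmk, h3⟩ : ∃ m', m' ≤ c ∧ n' ≤ m' ∧ m' ≤ n' + k ∧
      Rel (R (j + c + k) (j + c) c s t) (R (j + c + k) (j + c) c ((p:ℤ_[p]) ^ m') ((p:ℤ_[p]) ^ n')) := by
    by_cases h : m ≤ n' + k
    · exact ⟨m, hm, hnm, h, h2⟩
    · refine ⟨n' + k, by omega, by omega, le_rfl, h2.trans ?_⟩
      convert move2 (b := j + c) (c := c) (k := k) ((p:ℤ_[p]) ^ m) ((p:ℤ_[p]) ^ n') (1 - (p:ℤ_[p]) ^ (m - (n' + k))) using 2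
      rw [mul_assoc, ← pow_add, sub_mul, ← pow_add, add_comm k n', Nat.sub_add_cancel (by omega)]
      ring
  exact ⟨![k, j, c, m', n'], ⟨hm', hn', hnm', hmk⟩, h3⟩

theorem pdvd_nat {n i j : ℕ} (hi : i < p ^ n) (hj : j < p ^ n)
    (h : (p:ℤ_[p]) ^ n ∣ (i : ℤ_[p]) - j) : i = j := by
  have h' : (p:ℤ_[p]) ^ n ∣ (((i:ℤ) - j : ℤ) : ℤ_[p]) := by push_cast; exact h
  rw [PadicInt.pow_p_dvd_int_iff] at h'
  have := Int.eq_zero_of_abs_lt_dvd h' (by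
    have hi' : (i:ℤ) < (p:ℤ) ^ n := by exact_mod_cast hi
    have hj' : (j:ℤ) < (p:ℤ) ^ n := by exact_mod_cast hj
    rw [abs_lt]; constructor <;> omega)
  omega

theorem p_ne : (p:ℤ_[p]) ≠ 0 := by
  exact_mod_cast (Fact.out : p.Prime).ne_zero

theorem ppow_ne (n : ℕ) : (p:ℤ_[p]) ^ n ≠ 0 := pow_ne_zero _ p_ne

theorem appr' (x : ℤ_[p]) (n : ℕ) : ∃ i < p ^ n, ∃ k, x - (i:ℤ_[p]) = (p:ℤ_[p]) ^ n * k := by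
  have := PadicInt.appr_spec n x
  rw [Ideal.mem_span_singleton] at this
  exact ⟨x.appr n, PadicInt.appr_lt _ _, this⟩

theorem card_R (a b c : ℕ) (s t : ℤ_[p]) :
    Nat.card (V p ⧸ (R a b c s t)) = p ^ (a + b + c) := by
  let f : Fin (p ^ a) × Fin (p ^ b) × Fin (p ^ c) → V p ⧸ (R a b c s t) := fun x =>
    Submodule.Quotient.mk ![((x.1 : ℕ) : ℤ_[p]), ((x.2.1 : ℕ) : ℤ_[p]), ((x.2.2 : ℕ) : ℤ_[p])]
  have hf : Function.Bijective f := by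
    constructor
    · rintro ⟨i, j, k⟩ ⟨i', j', k'⟩ h
      simp only [f] at h
      rw [Submodule.Quotient.eq] at h
      obtain ⟨α, β, γ, h0, h1, h2⟩ := h
      simp at h0 h1 h2
      have e0 : (i:ℕ) = i' := pdvd_nat i.2 i'.2 ⟨α, h0⟩
      have e1 : (j:ℕ) = j' := pdvd_nat j.2 j'.2 ⟨β, h1⟩
      have z0 : α = 0 := by
        rw [e0, sub_self] at h0
        exact (mul_eq_zero.1 h0.symm).resolve_left (ppow_ne a)
      have z1 : β = 0 := by
        rw [e1, sub_self] at h1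
        exact (mul_eq_zero.1 h1.symm).resolve_left (ppow_ne b)
      rw [z0, z1] at h2
      have e2 : (k:ℕ) = k' := pdvd_nat k.2 k'.2 ⟨γ, by rw [h2]; ring⟩
      simp [Fin.ext_iff, e0, e1, e2]
    · intro q
      obtain ⟨v, rfl⟩ := Submodule.Quotient.mk_surjective _ q
      obtain ⟨i, hi, α, hα⟩ := appr' (v 0) a
      obtain ⟨j, hj, β, hβ⟩ := appr' (v 1) b
      obtain ⟨k, hk, γ, hγ⟩ := appr' (v 2 - s * α - t * β) c
      refine ⟨(⟨i, hi⟩, ⟨j, hj⟩, ⟨k, hk⟩), ?_⟩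
      symm
      simp only [f]
      rw [Submodule.Quotient.eq]
      exact ⟨α, β, γ, by simpa using hα, by simpa using hβ, by
        simp; linear_combination hγ⟩
  rw [← Nat.card_eq_of_bijective f hf]
  simp [pow_add, mul_assoc]

theorem good_R {a b c : ℕ} (hab : b ≤ a) (hcb : c ≤ b) (s t : ℤ_[p]) :
    Good (R a b c s t) := by
  constructor
  · rintro u v ⟨α, β, γ, h0, h1, h2⟩
    obtain ⟨k, rfl⟩ := Nat.exists_eq_add_of_le hcb
    obtain ⟨l, rfl⟩ := Nat.exists_eq_add_of_le hab
    refine ⟨0, 0, u 0 * (p:ℤ_[p]) ^ k * β - u 1 * (p:ℤ_[p]) ^ (k + l) * α, ?_, ?_, ?_⟩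
    · simp [hbr]
    · simp [hbr]
    · simp [hbr, h0, h1]; ring
  · rw [card_R]
    exact pow_ne_zero _ (Fact.out : p.Prime).ne_zero

/-- image of a submodule under a coordinate -/
theorem map_span (I : Submodule ℤ_[p] (V p)) (i : Fin 3) (h : ∃ v ∈ I, v i ≠ 0) :
    ∃ n : ℕ, (∃ v ∈ I, v i = (p:ℤ_[p]) ^ n) ∧ ∀ v ∈ I, (p:ℤ_[p]) ^ n ∣ v i := by
  obtain ⟨v, hv, hvi⟩ := h
  let K : Ideal ℤ_[p] := Submodule.map (LinearMap.proj i : V p →ₗ[ℤ_[p]] ℤ_[p]) I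
  have hK : K ≠ ⊥ := by
    intro h
    apply hvi
    have : v i ∈ K := ⟨v, hv, rfl⟩
    rw [h] at this
    simpa using this
  obtain ⟨n, hn⟩ := PadicInt.ideal_eq_span_pow_p hK
  refine ⟨n, ?_, ?_⟩
  · have : (p:ℤ_[p]) ^ n ∈ K := by rw [hn]; exact Ideal.mem_span_singleton_self _
    obtain ⟨w, hw, h⟩ := this
    exact ⟨w, hw, h⟩
  · intro w hw
    have : w i ∈ K := ⟨w, hw, rfl⟩
    rwa [hn, Ideal.mem_span_singleton] at this

theorem good_smul {I : Submodule ℤ_[p] (V p)} (hI : Good I) :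
    ∃ N : ℤ_[p], N ≠ 0 ∧ ∀ v, N • v ∈ I := by
  refine ⟨(Nat.card (V p ⧸ I) : ℕ), by exact_mod_cast hI.2, fun v => ?_⟩
  rw [← Submodule.Quotient.mk_eq_zero, Nat.cast_smul_eq_nsmul]
  rw [Submodule.Quotient.mk_smul]
  exact card_nsmul_eq_zero'

theorem good_ne {I : Submodule ℤ_[p] (V p)} (hI : Good I) (i : Fin 3) :
    ∃ v ∈ I, (∀ j, j ≠ i → v j = 0) ∧ v i ≠ 0 := by
  obtain ⟨N, h0, h⟩ := good_smul hI
  exact ⟨_, h (Pi.single i 1), fun j hj => by simp [hj], by simpa using h0⟩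

theorem rel_map (a b c d e : ℤ_[p]) (h : e * (a * d - b * c) = 1) (I : Submodule ℤ_[p] (V p)) :
    Rel I (I.map (gl a b c d e h : V p →ₗ[ℤ_[p]] V p)) :=
  ⟨gl a b c d e h, gl_br a b c d e h, rfl⟩

theorem prep {I : Submodule ℤ_[p] (V p)} (hI : Good I) :
    ∃ J, Rel I J ∧ ∃ b : ℕ, (∃ v ∈ J, v 0 = 0 ∧ v 1 = (p:ℤ_[p]) ^ b) ∧
      ∀ v ∈ J, (p:ℤ_[p]) ^ b ∣ v 0 ∧ (p:ℤ_[p]) ^ b ∣ v 1 := by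
  obtain ⟨v0, hv0, _, hv0'⟩ := good_ne hI 0
  obtain ⟨v1, hv1, _, hv1'⟩ := good_ne hI 1
  obtain ⟨m, ⟨x, hx, hxm⟩, hm⟩ := map_span I 0 ⟨v0, hv0, hv0'⟩
  obtain ⟨n, ⟨y, hy, hyn⟩, hn⟩ := map_span I 1 ⟨v1, hv1, hv1'⟩
  rcases le_total n m with h | h
  · have hd := pow_dvd_pow (p:ℤ_[p]) h
    obtain ⟨u, hu⟩ := hd.trans (hm y hy)
    refine ⟨_, rel_map 1 (-u) 0 1 1 (by ring) I, n, ⟨_, ⟨y, hy, rfl⟩, ?_, ?_⟩, ?_⟩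
    · simp [gl, hu, hyn]; ring
    · simp [gl, hyn]
    · rintro _ ⟨w, hw, rfl⟩
      have h0 := hd.trans (hm w hw)
      have h1 := hn w hw
      constructor
      · simp only [gl]; simp
        exact dvd_add h0 (Dvd.dvd.neg_right (Dvd.dvd.mul_left h1 u))
      · simpa [gl] using h1
  · have hd := pow_dvd_pow (p:ℤ_[p]) h
    obtain ⟨u, hu⟩ := hd.trans (hn x hx)
    refine ⟨_, rel_map (-u) 1 1 0 (-1) (by ring) I, m, ⟨_, ⟨x, hx, rfl⟩, ?_, ?_⟩, ?_⟩
    · simp [gl, hu, hxm]; ring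
    · simp [gl, hxm]
    · rintro _ ⟨w, hw, rfl⟩
      have h0 := hm w hw
      have h1 := hd.trans (hn w hw)
      constructor
      · simp only [gl]; simp
        exact dvd_add (Dvd.dvd.neg_right (Dvd.dvd.mul_left h0 u)) h1
      · simpa [gl] using h0

theorem to_R {J : Submodule ℤ_[p] (V p)} (hJ : Good J) (b : ℕ)
    (h1 : ∃ v ∈ J, v 0 = 0 ∧ v 1 = (p:ℤ_[p]) ^ b)
    (h2 : ∀ v ∈ J, (p:ℤ_[p]) ^ b ∣ v 0 ∧ (p:ℤ_[p]) ^ b ∣ v 1) :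
    ∃ (k c : ℕ) (s t : ℤ_[p]), c ≤ b ∧ J = R (b + k) b c s t := by
  obtain ⟨y, hy, hy0, hy1⟩ := h1
  obtain ⟨v0, hv0, _, hv0'⟩ := good_ne hJ 0
  obtain ⟨a, ⟨x, hx, hxa⟩, ha⟩ := map_span J 0 ⟨v0, hv0, hv0'⟩
  obtain ⟨v2, hv2, hv2z, hv2'⟩ := good_ne hJ 2
  let Z : Submodule ℤ_[p] (V p) := J ⊓ (LinearMap.ker (LinearMap.proj 0 : V p →ₗ[ℤ_[p]] ℤ_[p]) ⊓
    LinearMap.ker (LinearMap.proj 1 : V p →ₗ[ℤ_[p]] ℤ_[p]))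
  have hZ : ∀ v, v ∈ Z ↔ v ∈ J ∧ v 0 = 0 ∧ v 1 = 0 := fun v => by simp [Z]
  obtain ⟨c, ⟨z, hz, hzc⟩, hc⟩ := map_span Z 2
    ⟨v2, (hZ _).2 ⟨hv2, hv2z 0 (by decide), hv2z 1 (by decide)⟩, hv2'⟩
  obtain ⟨hz, hz0, hz1⟩ := (hZ _).1 hz
  have hba : b ≤ a := by
    have := (h2 x hx).1
    rw [hxa] at this
    exact (pow_dvd_pow_iff p_ne PadicInt.prime_p.not_isUnit).1 this
  have hcb : c ≤ b := by
    have h3 : hbr (Pi.single 0 1) y ∈ Z :=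
      (hZ _).2 ⟨hJ.1 _ _ hy, by simp [hbr], by simp [hbr]⟩
    have := hc _ h3
    simp [hbr, hy1] at this
    exact (pow_dvd_pow_iff p_ne PadicInt.prime_p.not_isUnit).1 this
  obtain ⟨k, rfl⟩ := Nat.exists_eq_add_of_le hba
  obtain ⟨q, hq⟩ := (h2 x hx).2
  refine ⟨k, c, x 2 - q * y 2, y 2, hcb, ?_⟩
  ext v
  constructor
  · intro hv
    obtain ⟨α, hα⟩ := ha v hv
    obtain ⟨β, hβ⟩ := (h2 v hv).2
    have hw : v - α • (x - q • y) - β • y ∈ Z := by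
      rw [hZ]
      refine ⟨J.sub_mem (J.sub_mem hv (J.smul_mem _ (J.sub_mem hx (J.smul_mem _ hy))))
        (J.smul_mem _ hy), ?_, ?_⟩
      · simp [hα, hxa, hy0]; ring
      · simp [hβ, hq, hy1]; ring
    obtain ⟨γ, hγ⟩ := hc _ hw
    simp at hγ
    exact ⟨α, β, γ, hα, hβ, by linear_combination hγ⟩
  · rintro ⟨α, β, γ, e0, e1, e2⟩
    have : v = α • (x - q • y) + β • y + γ • z := by
      ext i; fin_cases i
      · simp [e0, hxa, hy0, hz0]; ring
      · simp [e1, hq, hy1, hz1]; ring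
      · simp [e2, hzc]; ring
    rw [this]
    exact J.add_mem (J.add_mem (J.smul_mem _ (J.sub_mem hx (J.smul_mem _ hy)))
        (J.smul_mem _ hy)) (J.smul_mem _ hz)

theorem exists_rep {I : Submodule ℤ_[p] (V p)} (hI : Good I) :
    ∃ e, Valid e ∧ Rel I (Rep p e) := by
  obtain ⟨J, hIJ, b, h1, h2⟩ := prep hI
  obtain ⟨k, c, s, t, hcb, rfl⟩ := to_R (hIJ.good hI) b h1 h2
  obtain ⟨e, he, h⟩ := reduce b c k hcb s t
  exact ⟨e, he, hIJ.trans h⟩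

/-! invariants -/

theorem vec_eq (v : V p) : v = v 0 • ![1, 0, 0] + v 1 • ![0, 1, 0] + v 2 • ![0, 0, 1] := by
  ext i; fin_cases i <;> simp

theorem aut_z (φ : V p ≃ₗ[ℤ_[p]] V p) (h : ∀ u v : V p, φ (hbr u v) = hbr (φ u) (φ v)) :
    ∃ d, φ ![0, 0, 1] = ![0, 0, d] := by
  have : (![0, 0, 1] : V p) = hbr ![1, 0, 0] ![0, 1, 0] := by
    ext i; fin_cases i <;> simp [hbr]
  refine ⟨hbr (φ ![1, 0, 0]) (φ ![0, 1, 0]) 2, ?_⟩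
  rw [this, h]
  ext i; fin_cases i <;> simp [hbr]

theorem aut_dvd (φ : V p ≃ₗ[ℤ_[p]] V p) (h : ∀ u v : V p, φ (hbr u v) = hbr (φ u) (φ v))
    (r : ℤ_[p]) (v : V p) (h0 : r ∣ v 0) (h1 : r ∣ v 1) : r ∣ φ v 0 ∧ r ∣ φ v 1 := by
  obtain ⟨d, hd⟩ := aut_z φ h
  rw [vec_eq v]
  simp only [map_add, map_smul, hd]
  constructor
  · simpa using dvd_add (Dvd.dvd.mul_right h0 _) (Dvd.dvd.mul_right h1 _)
  · simpa using dvd_add (Dvd.dvd.mul_right h0 _) (Dvd.dvd.mul_right h1 _)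

theorem lin_dvd (φ : V p ≃ₗ[ℤ_[p]] V p) (r : ℤ_[p]) (v : V p) (h : ∀ i, r ∣ v i) (i : Fin 3) :
    r ∣ φ v i := by
  rw [vec_eq v]
  simp only [map_add, map_smul]
  exact dvd_add (dvd_add (Dvd.dvd.mul_right (h 0) _) (Dvd.dvd.mul_right (h 1) _))
    (Dvd.dvd.mul_right (h 2) _)

theorem inv_c {I J : Submodule ℤ_[p] (V p)} (h : Rel I J) (r : ℤ_[p]) (hr : ![0, 0, r] ∈ I) :
    ![0, 0, r] ∈ J := by
  obtain ⟨φ, h1, rfl⟩ := h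
  have h1' : ∀ u v : V p, φ.symm (hbr u v) = hbr (φ.symm u) (φ.symm v) := fun u v => by
    apply φ.injective; rw [h1]; simp
  obtain ⟨d, hd⟩ := aut_z φ.symm h1'
  refine ⟨d • ![0, 0, r], I.smul_mem _ hr, ?_⟩
  have e : (d • ![0, 0, r] : V p) = r • φ.symm ![0, 0, 1] := by
    rw [hd]; ext i; fin_cases i <;> simp [mul_comm]
  rw [e]
  simp

theorem inv_b {I J : Submodule ℤ_[p] (V p)} (h : Rel I J) (r : ℤ_[p])
    (hr : ∀ v ∈ I, r ∣ v 0 ∧ r ∣ v 1) : ∀ v ∈ J, r ∣ v 0 ∧ r ∣ v 1 := by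
  obtain ⟨φ, h1, rfl⟩ := h
  rintro _ ⟨w, hw, rfl⟩
  exact aut_dvd φ h1 r w (hr w hw).1 (hr w hw).2

theorem inv_e {I J : Submodule ℤ_[p] (V p)} (h : Rel I J) (q r : ℤ_[p])
    (hr : ∀ v ∈ I, q ∣ v 0 → q ∣ v 1 → ∀ i, r ∣ v i) :
    ∀ v ∈ J, q ∣ v 0 → q ∣ v 1 → ∀ i, r ∣ v i := by
  obtain ⟨φ, h1, rfl⟩ := h
  have h1' : ∀ u v : V p, φ.symm (hbr u v) = hbr (φ.symm u) (φ.symm v) := fun u v => by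
    apply φ.injective; rw [h1]; simp
  rintro _ ⟨w, hw, rfl⟩ h2 h3 i
  have := aut_dvd φ.symm h1' q _ h2 h3
  simp at this
  exact lin_dvd φ r w (hr w hw this.1 this.2) i

theorem pd {m n : ℕ} : (p:ℤ_[p]) ^ m ∣ (p:ℤ_[p]) ^ n ↔ m ≤ n :=
  pow_dvd_pow_iff p_ne PadicInt.prime_p.not_isUnit

theorem rep_c {e : Fin 5 → ℕ} (n : ℕ) : ![0, 0, (p:ℤ_[p]) ^ n] ∈ Rep p e ↔ e 2 ≤ n := by
  constructor
  · rintro ⟨α, β, γ, h0, h1, h2⟩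
    simp at h0 h1 h2
    have z0 : α = 0 := h0.resolve_left fun h => (Fact.out : p.Prime).ne_zero h.1
    have z1 : β = 0 := h1.resolve_left fun h => (Fact.out : p.Prime).ne_zero h.1
    rw [z0, z1] at h2
    exact pd.1 ⟨γ, by rw [h2]; ring⟩
  · intro h
    exact ⟨0, 0, (p:ℤ_[p]) ^ (n - e 2), by simp, by simp, by
      simp [← pow_add, Nat.add_sub_cancel' h]⟩

theorem mem1 (e : Fin 5 → ℕ) :
    ![(p:ℤ_[p]) ^ (e 1 + e 2 + e 0), 0, (p:ℤ_[p]) ^ (e 3)] ∈ Rep p e :=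
  ⟨1, 0, 0, by simp, by simp, by simp⟩

theorem mem2 (e : Fin 5 → ℕ) :
    ![0, (p:ℤ_[p]) ^ (e 1 + e 2), (p:ℤ_[p]) ^ (e 4)] ∈ Rep p e :=
  ⟨0, 1, 0, by simp, by simp, by simp⟩

theorem rep_b {e : Fin 5 → ℕ} (n : ℕ) :
    (∀ v ∈ Rep p e, (p:ℤ_[p]) ^ n ∣ v 0 ∧ (p:ℤ_[p]) ^ n ∣ v 1) ↔ n ≤ e 1 + e 2 := by
  constructor
  · intro h
    exact pd.1 (by simpa using (h _ (mem2 e)).2)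
  · rintro h v ⟨α, β, γ, h0, h1, h2⟩
    rw [h0, h1]
    exact ⟨Dvd.dvd.mul_right (pd.2 (by omega)) _, Dvd.dvd.mul_right (pd.2 (by omega)) _⟩

theorem rep_e5 {e : Fin 5 → ℕ} (he : Valid e) (n : ℕ) :
    (∀ v ∈ Rep p e, (1:ℤ_[p]) ∣ v 0 → (1:ℤ_[p]) ∣ v 1 → ∀ i, (p:ℤ_[p]) ^ n ∣ v i) ↔ n ≤ e 4 := by
  obtain ⟨g1, g2, g3, g4⟩ := he
  constructor
  · intro h
    exact pd.1 (by simpa using h _ (mem2 e) (one_dvd _) (one_dvd _) 2)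
  · rintro h v ⟨α, β, γ, h0, h1, h2⟩ - - i
    fin_cases i
    · simp [h0]; exact Dvd.dvd.mul_right (pd.2 (by omega)) _
    · simp [h1]; exact Dvd.dvd.mul_right (pd.2 (by omega)) _
    · simp [h2]
      exact dvd_add (dvd_add (Dvd.dvd.mul_right (pd.2 (by omega)) _)
        (Dvd.dvd.mul_right (pd.2 (by omega)) _)) (Dvd.dvd.mul_right (pd.2 (by omega)) _)

theorem rep_e4 {e : Fin 5 → ℕ} (he : Valid e) (n : ℕ) :
    (∀ v ∈ Rep p e, (p:ℤ_[p]) ^ (e 1 + e 2 + e 0) ∣ v 0 → (p:ℤ_[p]) ^ (e 1 + e 2 + e 0) ∣ v 1 →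
      ∀ i, (p:ℤ_[p]) ^ n ∣ v i) ↔ n ≤ e 3 := by
  obtain ⟨g1, g2, g3, g4⟩ := he
  constructor
  · intro h
    exact pd.1 (by simpa using h _ (mem1 e) (by simp) (by simp) 2)
  · rintro h v ⟨α, β, γ, h0, h1, h2⟩ - hd i
    rw [h1, pow_add _ (e 1 + e 2)] at hd
    obtain ⟨δ, rfl⟩ := (mul_dvd_mul_iff_left (ppow_ne _)).1 hd
    fin_cases i
    · simp [h0]; exact Dvd.dvd.mul_right (pd.2 (by omega)) _
    · simp [h1]; exact Dvd.dvd.mul_right (pd.2 (by omega)) _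
    · simp [h2]
      rw [← mul_assoc, ← pow_add]
      exact dvd_add (dvd_add (Dvd.dvd.mul_right (pd.2 (by omega)) _)
        (Dvd.dvd.mul_right (pd.2 (by omega)) _)) (Dvd.dvd.mul_right (pd.2 (by omega)) _)

theorem card_rep (e : Fin 5 → ℕ) :
    Nat.card (V p ⧸ Rep p e) = p ^ (e 0 + 2 * e 1 + 3 * e 2) := by
  rw [Rep, card_R]; congr 1; ring

theorem half {e e' : Fin 5 → ℕ} (he : Valid e) (he' : Valid e') (h : Rel (Rep p e) (Rep p e')) :
    e' 2 ≤ e 2 ∧ e 1 + e 2 ≤ e' 1 + e' 2 ∧ e 4 ≤ e' 4 ∧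
      (e 1 + e 2 + e 0 = e' 1 + e' 2 + e' 0 → e 3 ≤ e' 3) ∧
      e 0 + 2 * e 1 + 3 * e 2 = e' 0 + 2 * e' 1 + 3 * e' 2 := by
  refine ⟨(rep_c _).1 (inv_c h _ ((rep_c _).2 le_rfl)),
    (rep_b _).1 (inv_b h _ ((rep_b _).2 le_rfl)),
    (rep_e5 he' _).1 (inv_e h _ _ ((rep_e5 he _).2 le_rfl)), fun hh => ?_, ?_⟩
  · have := inv_e h _ _ ((rep_e4 he _).2 le_rfl)
    rw [hh] at this
    exact (rep_e4 he' _).1 this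
  · have := h.card
    rw [card_rep, card_rep] at this
    exact Nat.pow_right_injective (Fact.out : p.Prime).two_le this

theorem rep_inj {e e' : Fin 5 → ℕ} (he : Valid e) (he' : Valid e')
    (h : Rel (Rep p e) (Rep p e')) : e = e' := by
  obtain ⟨a1, a2, a3, a4, a5⟩ := half he he' h
  obtain ⟨b1, b2, b3, b4, b5⟩ := half he' he h.symm
  have h0 : e 0 = e' 0 := by omega
  have h1 : e 1 = e' 1 := by omega
  have h2 : e 2 = e' 2 := by omega
  have h3 : e 3 = e' 3 := le_antisymm (a4 (by omega)) (b4 (by omega))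
  have h4 : e 4 = e' 4 := by omega
  ext i; fin_cases i <;> assumption

theorem good_rep (e : Fin 5 → ℕ) : Good (Rep p e) := good_R (by omega) (by omega) _ _

end HeisAux

/-- there is a bijection between ideals of finite index in the
Heisenberg Lie algebra L_p up to Aut(L_p), and 5-tuples (e1,...,e5) ∈ ℕ₀⁵ with
e4 ≤ e3, e5 ≤ e3, e5 ≤ e4 ≤ e5 + e1; an ideal with invariants (e1,...,e5)
has index p^{e1+2e2+3e3}.  (Here e 0, ..., e 4 stand for e1, ..., e5.) -/
theorem stmt_16 (p : ℕ) [Fact p.Prime] :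
    ∃ F : {I : Submodule ℤ_[p] (Fin 3 → ℤ_[p]) //
            (∀ u v : Fin 3 → ℤ_[p], v ∈ I → hbr u v ∈ I) ∧
            Nat.card ((Fin 3 → ℤ_[p]) ⧸ I) ≠ 0}
        → {e : Fin 5 → ℕ // e 3 ≤ e 2 ∧ e 4 ≤ e 2 ∧ e 4 ≤ e 3 ∧ e 3 ≤ e 4 + e 0},
      Function.Surjective F ∧
      (∀ I J, F I = F J ↔
        ∃ φ : (Fin 3 → ℤ_[p]) ≃ₗ[ℤ_[p]] (Fin 3 → ℤ_[p]),
          (∀ u v : Fin 3 → ℤ_[p], φ (hbr u v) = hbr (φ u) (φ v)) ∧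
          Submodule.map (φ : (Fin 3 → ℤ_[p]) →ₗ[ℤ_[p]] (Fin 3 → ℤ_[p])) I.1 = J.1) ∧
      (∀ I, Nat.card ((Fin 3 → ℤ_[p]) ⧸ I.1)
          = p ^ ((F I).1 0 + 2 * (F I).1 1 + 3 * (F I).1 2)) := by
  classical
  have H := fun I : {I : Submodule ℤ_[p] (Fin 3 → ℤ_[p]) //
            (∀ u v : Fin 3 → ℤ_[p], v ∈ I → hbr u v ∈ I) ∧
            Nat.card ((Fin 3 → ℤ_[p]) ⧸ I) ≠ 0} => HeisAux.exists_rep (I := I.1) I.2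
  choose f hf hrel using H
  refine ⟨fun I => ⟨f I, hf I⟩, ?_, ?_, ?_⟩
  · rintro ⟨e, he⟩
    refine ⟨⟨HeisAux.Rep p e, HeisAux.good_rep e⟩, ?_⟩
    apply Subtype.ext
    exact (HeisAux.rep_inj he (hf _) (hrel ⟨HeisAux.Rep p e, HeisAux.good_rep e⟩)).symm
  · intro I J
    constructor
    · intro h
      have h' : f I = f J := congrArg Subtype.val h
      have h1 := hrel I
      rw [h'] at h1
      exact h1.trans (hrel J).symm
    · intro h
      apply Subtype.ext
      have h : HeisAux.Rel I.1 J.1 := h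
      exact HeisAux.rep_inj (hf I) (hf J) (((hrel I).symm.trans h).trans (hrel J))
  · intro I
    exact (hrel I).card.trans (HeisAux.card_rep (f I))
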